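/- arXiv:2604.14681 — 2 statements merged into one kernel-verified Lean document; each statement's English description precedes it below -/
import Mathlib

section
/- (Finite-volume expansion of the two-point Janossy density, equation (2.15).) Let d ≥ 1, let Λ ⊆ ℝ^d be a bounded measurable set, let ρ = (ρ^{(n)})_{n≥0} be a configuration functional over E = ℝ^d with ρ^{(0)} = 1 and each ρ^{(n)} measurable, and let x₁, x₂ ∈ ℝ^d with ρ^{(2)}(x₁,x₂) ≠ 0. Let F ∈ A₀ be the unique configuration functional satisfying D_{x₁,x₂} ρ = ρ^{(2)}(x₁,x₂) · exp∗ F. Suppose there are constants C > 0 and 0 < c < 1/2 such that for every k ≥ 0 and every y ∈ ℝ^d, ∫_{Λ^k} |F^{(k+1)}(y, y₁,…,y_k)| dy₁…dy_k ≤ k! · C · c^k. Then the series Σ_{k≥1} ((−1)^k/k!) ∫_{Λ^k} F^{(k)}(y₁,…,y_k) dy and Σ_{k≥0} ((−1)^k/k!) ∫_{Λ^k} ρ^{(2+k)}(x₁,x₂,y₁,…,y_k) dy converge absolutely, and Σ_{k=0}^∞ ((−1)^k/k!) ∫_{Λ^k} ρ^{(2+k)}(x₁,x₂,y₁,…,y_k)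 dy = ρ^{(2)}(x₁,x₂) · exp( Σ_{k=1}^∞ ((−1)^k/k!) ∫_{Λ^k} F^{(k)}(y₁,…,y_k) dy ). -/
open MeasureTheory Finset

abbrev CF (E : Type) : Type := (n : ℕ) → (Fin n → E) → ℝ

namespace CF

variable {E : Type}

/-- Symmetry of a configuration functional under permutations of the arguments. -/
def IsSymm (F : CF E) : Prop :=
  ∀ (n : ℕ) (σ : Equiv.Perm (Fin n)) (x : Fin n → E), F n (x ∘ σ) = F n x

/-- The subtuple of `x` with indices in `I`, listed in increasing order. -/
noncomputable def sub {n : ℕ} (x : Fin n → E) (I : Finset (Fin n)) : Fin I.card → E :=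
  fun i => x (I.orderIsoOfFin rfl i).1

/-- The convolution `Ψ ∗ Φ`. -/
noncomputable def conv (Ψ Φ : CF E) : CF E :=
  fun n x => ∑ I : Finset (Fin n), Ψ I.card (sub x I) * Φ Iᶜ.card (sub x Iᶜ)

/-- The unit `𝟙`. -/
def unit : CF E := fun n _ => if n = 0 then 1 else 0

/-- Star-powers `Φ^{∗m}`. -/
noncomputable def starPow (Φ : CF E) : ℕ → CF E
  | 0 => unit
  | m + 1 => conv Φ (starPow Φ m)

/-- The star-exponential `exp∗ Φ = 𝟙 + Σ_{m≥1} Φ^{∗m}/m!`; on `A₀` the sum in the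
`n`-th component is finite since `(Φ^{∗m})^{(n)} = 0` for `m > n`. -/
noncomputable def starExp (Φ : CF E) : CF E :=
  fun n x => ∑ m ∈ Finset.range (n + 1), ((m.factorial : ℝ))⁻¹ * starPow Φ m n x

/-- The derivative `D_x`. -/
noncomputable def D (x : E) (Φ : CF E) : CF E := fun n y => Φ (n + 1) (Fin.cons x y)

/-- The second derivative `D_{x₁,x₂} = D_{x₁} ∘ D_{x₂}`. -/
noncomputable def D2 (x₁ x₂ : E) (Φ : CF E) : CF E := D x₁ (D x₂ Φ)

end CF

/-- Euclidean space `ℝ^d`. -/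
abbrev Euc (d : ℕ) : Type := EuclideanSpace ℝ (Fin d)

/-- The product measure on `Λ^n ⊆ (ℝ^d)^n` (Lebesgue measure restricted to `Λ`
in each coordinate). -/
noncomputable def piRestrict (d : ℕ) (Λ : Set (Euc d)) (n : ℕ) :
    MeasureTheory.Measure (Fin n → Euc d) :=
  MeasureTheory.Measure.pi fun _ => MeasureTheory.volume.restrict Λ

/-- Lebesgue measure on `(ℝ^d)^n`. -/
noncomputable def piVol (d : ℕ) (n : ℕ) : MeasureTheory.Measure (Fin n → Euc d) :=
  MeasureTheory.Measure.pi fun _ => MeasureTheory.volume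

/-!
Weighting the `n`-point integral of a configuration functional by `zⁿ / n!` turns convolution into
multiplication of formal power series: an `n`-point set has `n.choose k` subsets of size `k`, and
each of them splits the integral over `Eⁿ` as a product. Hence the series of `exp∗ F` is the
exponential series composed with the series of `F`. The moment bound makes the latter absolutely
convergent, so the composition may be summed by Fubini; `z = -1` gives the Janossy density.
-/

section PowerSeriesSums

open PowerSeries

section NormedRing

variable {R : Type*} [NormedRing R] {f g : R⟦X⟧}

theorem summable_norm_coeff_mul (hf : Summable fun n => ‖coeff n f‖)
    (hg : Summable fun n => ‖coeff n g‖) : Summable fun n => ‖coeff n (f * g)‖ := by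
  simpa only [coeff_mul] using summable_norm_sum_mul_antidiagonal_of_summable_norm hf hg

theorem tsum_coeff_mul [CompleteSpace R] (hf : Summable fun n => ‖coeff n f‖)
    (hg : Summable fun n => ‖coeff n g‖) :
    ∑' n, coeff n (f * g) = (∑' n, coeff n f) * ∑' n, coeff n g := by
  simpa only [coeff_mul] using
    (tsum_mul_tsum_eq_tsum_sum_antidiagonal_of_summable_norm hf hg).symm

theorem tsum_norm_coeff_mul_le (hf : Summable fun n => ‖coeff n f‖)
    (hg : Summable fun n => ‖coeff n g‖) :
    ∑' n, ‖coeff n (f * g)‖ ≤ (∑' n, ‖coeff n f‖) * ∑' n, ‖coeff n g‖ := by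
  have hf' : Summable fun n => ‖‖coeff n f‖‖ := by simpa only [norm_norm] using hf
  have hg' : Summable fun n => ‖‖coeff n g‖‖ := by simpa only [norm_norm] using hg
  rw [tsum_mul_tsum_eq_tsum_sum_antidiagonal_of_summable_norm hf' hg']
  refine (summable_norm_coeff_mul hf hg).tsum_le_tsum (fun n => ?_)
    (summable_norm_sum_mul_antidiagonal_of_summable_norm hf' hg').of_norm
  rw [coeff_mul]
  exact norm_sum_le_of_le _ fun p _ => norm_mul_le _ _

theorem summable_norm_coeff_one : Summable fun n => ‖coeff n (1 : R⟦X⟧)‖ :=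
  summable_of_ne_finset_zero (s := {0}) fun n hn => by
    rw [coeff_one, if_neg (by simpa using hn), norm_zero]

theorem summable_norm_coeff_pow (hf : Summable fun n => ‖coeff n f‖) (m : ℕ) :
    Summable fun n => ‖coeff n (f ^ m)‖ := by
  induction m with
  | zero => simpa only [pow_zero] using summable_norm_coeff_one
  | succ m ih => simpa only [pow_succ] using summable_norm_coeff_mul ih hf

theorem tsum_coeff_pow [CompleteSpace R] (hf : Summable fun n => ‖coeff n f‖) (m : ℕ) :
    ∑' n, coeff n (f ^ m) = (∑' n, coeff n f) ^ m := by
  induction m with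
  | zero => simp [coeff_one]
  | succ m ih =>
    rw [pow_succ, tsum_coeff_mul (summable_norm_coeff_pow hf m) hf, ih, pow_succ]

theorem tsum_norm_coeff_pow_le [NormOneClass R] (hf : Summable fun n => ‖coeff n f‖) (m : ℕ) :
    ∑' n, ‖coeff n (f ^ m)‖ ≤ (∑' n, ‖coeff n f‖) ^ m := by
  induction m with
  | zero => simp [coeff_one, apply_ite norm]
  | succ m ih =>
    rw [pow_succ, pow_succ]
    exact (tsum_norm_coeff_mul_le (summable_norm_coeff_pow hf m) hf).trans
      (mul_le_mul_of_nonneg_right ih (tsum_nonneg fun _ => norm_nonneg _))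

theorem summable_norm_coeff_mul_coeff_pow [NormOneClass R] (hf : Summable fun n => ‖coeff n f‖)
    (hg : Summable fun m => ‖coeff m g‖ * (∑' n, ‖coeff n f‖) ^ m) :
    Summable fun p : ℕ × ℕ => ‖coeff p.1 g * coeff p.2 (f ^ p.1)‖ := by
  have hrow (m : ℕ) : Summable fun n => ‖coeff m g‖ * ‖coeff n (f ^ m)‖ :=
    (summable_norm_coeff_pow hf m).mul_left _
  suffices hprod : Summable fun p : ℕ × ℕ => ‖coeff p.1 g‖ * ‖coeff p.2 (f ^ p.1)‖ from
    hprod.of_nonneg_of_le (fun _ => norm_nonneg _) fun _ => norm_mul_le _ _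
  refine (summable_prod_of_nonneg fun _ => by positivity).2 ⟨hrow, ?_⟩
  refine hg.of_nonneg_of_le (fun m => tsum_nonneg fun n => by positivity) fun m => ?_
  simp only [tsum_mul_left]
  exact mul_le_mul_of_nonneg_left (tsum_norm_coeff_pow_le hf m) (norm_nonneg _)

end NormedRing

theorem coeff_pow_eq_zero_of_lt {A : Type*} [Semiring A] {f : A⟦X⟧} (hf : constantCoeff f = 0)
    {m n : ℕ} (hnm : n < m) : coeff n (f ^ m) = 0 :=
  coeff_of_lt_order n <|
    (Nat.cast_lt.2 hnm).trans_le (le_order_pow_of_constantCoeff_eq_zero m hf)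

theorem coeff_subst_eq_sum_range {A : Type*} [CommRing A] {f g : A⟦X⟧}
    (hf : constantCoeff f = 0) (n : ℕ) :
    coeff n (g.subst f) = ∑ m ∈ Finset.range (n + 1), coeff m g * coeff n (f ^ m) := by
  rw [coeff_subst' (HasSubst.of_constantCoeff_zero' hf)]
  refine finsum_eq_sum_of_support_subset _ fun m hm => ?_
  by_contra hmn
  have hpow : coeff n (f ^ m) = 0 := coeff_pow_eq_zero_of_lt hf (by simpa using hmn)
  exact hm (by simp only [hpow, smul_zero])

theorem coeff_subst_eq_tsum {A : Type*} [CommRing A] [TopologicalSpace A] {f g : A⟦X⟧}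
    (hf : constantCoeff f = 0) (n : ℕ) :
    coeff n (g.subst f) = ∑' m, coeff m g * coeff n (f ^ m) := by
  rw [coeff_subst_eq_sum_range hf]
  refine (tsum_eq_sum fun m hm => ?_).symm
  rw [coeff_pow_eq_zero_of_lt hf (by simpa using hm), mul_zero]

section NormedCommRing

variable {R : Type*} [NormedCommRing R] [NormOneClass R] {f g : R⟦X⟧}

theorem summable_norm_coeff_subst (hf0 : constantCoeff f = 0)
    (hf : Summable fun n => ‖coeff n f‖)
    (hg : Summable fun m => ‖coeff m g‖ * (∑' n, ‖coeff n f‖) ^ m) :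
    Summable fun n => ‖coeff n (g.subst f)‖ := by
  have hsum := (summable_norm_coeff_mul_coeff_pow hf hg).prod_symm
  refine hsum.prod.of_nonneg_of_le (fun _ => norm_nonneg _) fun n => ?_
  rw [coeff_subst_eq_tsum hf0]
  exact norm_tsum_le_tsum_norm (hsum.prod_factor n)

theorem tsum_coeff_subst [CompleteSpace R] (hf0 : constantCoeff f = 0)
    (hf : Summable fun n => ‖coeff n f‖)
    (hg : Summable fun m => ‖coeff m g‖ * (∑' n, ‖coeff n f‖) ^ m) :
    ∑' n, coeff n (g.subst f) = ∑' m, coeff m g * (∑' n, coeff n f) ^ m := by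
  calc ∑' n, coeff n (g.subst f)
      = ∑' n, ∑' m, coeff m g * coeff n (f ^ m) := tsum_congr (coeff_subst_eq_tsum hf0)
    _ = ∑' m, ∑' n, coeff m g * coeff n (f ^ m) :=
        Summable.tsum_comm (f := fun m n => coeff m g * coeff n (f ^ m))
          (summable_norm_coeff_mul_coeff_pow hf hg).of_norm
    _ = ∑' m, coeff m g * (∑' n, coeff n f) ^ m := tsum_congr fun m => by
        rw [(summable_norm_coeff_pow hf m).of_norm.tsum_mul_left, tsum_coeff_pow hf]

end NormedCommRing

end PowerSeriesSums

section RealExp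

open PowerSeries

theorem coeff_exp_real (m : ℕ) : coeff m (exp ℝ) = (m.factorial : ℝ)⁻¹ := by
  simp [coeff_exp]

theorem hasSum_coeff_exp_mul_pow (t : ℝ) :
    HasSum (fun m => coeff m (exp ℝ) * t ^ m) (Real.exp t) := by
  simpa [coeff_exp_real, Real.exp_eq_exp_ℝ] using NormedSpace.exp_series_hasSum_exp' (𝕂 := ℝ) t

theorem summable_norm_coeff_exp_mul_pow (t : ℝ) :
    Summable fun m => ‖coeff m (exp ℝ)‖ * t ^ m := by
  refine (hasSum_coeff_exp_mul_pow t).summable.congr fun m => ?_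
  rw [coeff_exp_real, Real.norm_of_nonneg (by positivity)]

variable {f : ℝ⟦X⟧}

theorem summable_norm_coeff_exp_subst (hf0 : constantCoeff f = 0)
    (hf : Summable fun n => ‖coeff n f‖) : Summable fun n => ‖coeff n ((exp ℝ).subst f)‖ :=
  summable_norm_coeff_subst hf0 hf (summable_norm_coeff_exp_mul_pow _)

theorem tsum_coeff_exp_subst (hf0 : constantCoeff f = 0)
    (hf : Summable fun n => ‖coeff n f‖) :
    ∑' n, coeff n ((exp ℝ).subst f) = Real.exp (∑' n, coeff n f) := by
  rw [tsum_coeff_subst hf0 hf (summable_norm_coeff_exp_mul_pow _),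
    (hasSum_coeff_exp_mul_pow _).tsum_eq]

end RealExp

theorem card_add_card_compl_fin {n : ℕ} (I : Finset (Fin n)) : I.card + Iᶜ.card = n := by
  rw [Finset.card_add_card_compl, Fintype.card_fin]

theorem lintegral_pi_fin_succ {E : Type*} [MeasurableSpace E] (μ : Measure E) [SigmaFinite μ]
    {n : ℕ} {f : (Fin (n + 1) → E) → ENNReal} (hf : Measurable f) :
    ∫⁻ x, f x ∂(Measure.pi fun _ => μ) =
      ∫⁻ y, ∫⁻ z, f (Fin.cons y z) ∂(Measure.pi fun _ => μ) ∂μ := by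
  have hmp := (measurePreserving_piFinSuccAbove (fun _ : Fin (n + 1) => μ) 0).symm
  rw [← hmp.lintegral_comp hf, lintegral_prod _ (by exact (hf.comp hmp.measurable).aemeasurable)]
  simp only [MeasurableEquiv.piFinSuccAbove_symm_apply, Fin.insertNthEquiv, Equiv.coe_fn_mk,
    Fin.insertNth_zero']

namespace CF

variable {E : Type}

theorem apply_congr_of_eq_comp_cast (Φ : CF E) {k n : ℕ} (h : k = n) {y : Fin k → E}
    {x : Fin n → E} (hyx : y = x ∘ Fin.cast h) : Φ k y = Φ n x := by
  subst h hyx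
  rfl

theorem apply_eq_zero_of_eq_zero {Φ : CF E} (hΦ0 : Φ 0 = 0) {k : ℕ} (hk : k = 0)
    (y : Fin k → E) : Φ k y = 0 := by
  subst hk
  exact congrFun hΦ0 y

theorem apply_sub_univ (Φ : CF E) {n : ℕ} (x : Fin n → E) :
    Φ (univ : Finset (Fin n)).card (sub x univ) = Φ n x := by
  have hcard : (univ : Finset (Fin n)).card = n := Finset.card_fin n
  refine apply_congr_of_eq_comp_cast Φ hcard (funext fun i => ?_)
  have hcast : Fin.cast hcard = (univ : Finset (Fin n)).orderEmbOfFin rfl :=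
    Finset.orderEmbOfFin_unique rfl (fun _ => mem_univ _) (Fin.cast_strictMono hcard)
  rw [sub, Finset.coe_orderIsoOfFin_apply, ← hcast, Function.comp_apply]

theorem conv_unit (Φ : CF E) : conv Φ unit = Φ := by
  funext n x
  rw [conv, Finset.sum_eq_single univ]
  · rw [apply_sub_univ Φ]
    simp [unit]
  · intro I _ hI
    have hIc : Iᶜ.card ≠ 0 := by
      rwa [Finset.card_ne_zero, Finset.nonempty_iff_ne_empty, Ne, Finset.compl_eq_empty_iff]
    rw [unit, if_neg hIc, mul_zero]
  · exact fun h => absurd (mem_univ _) h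

theorem starPow_one (Φ : CF E) : starPow Φ 1 = Φ := conv_unit Φ

theorem starPow_apply_eq_zero_of_lt {Φ : CF E} (hΦ0 : Φ 0 = 0) {m n : ℕ} (hnm : n < m) :
    starPow Φ m n = 0 := by
  induction m generalizing n with
  | zero => exact absurd hnm n.not_lt_zero
  | succ m ih =>
    funext x
    simp only [starPow, conv, Pi.zero_apply]
    refine Finset.sum_eq_zero fun I _ => ?_
    have hcard := card_add_card_compl_fin I
    by_cases hI : I.card = 0
    · rw [apply_eq_zero_of_eq_zero hΦ0 hI, zero_mul]
    · rw [ih (by omega), Pi.zero_apply, mul_zero]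

theorem starExp_succ_apply (Φ : CF E) (n : ℕ) (x : Fin (n + 1) → E) :
    starExp Φ (n + 1) x =
      ∑ m ∈ Finset.range n, ((m + 2).factorial : ℝ)⁻¹ * starPow Φ (m + 2) (n + 1) x +
        Φ (n + 1) x := by
  rw [starExp, Finset.sum_range_succ', Finset.sum_range_succ', starPow_one]
  simp [show starPow Φ 0 = unit from rfl, unit]

theorem IsSymm.D2_comm {Φ : CF E} (hΦ : IsSymm Φ) (x₁ x₂ : E) : D2 x₁ x₂ Φ = D2 x₂ x₁ Φ := by
  funext n y
  simp only [D2, D]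
  rw [← hΦ (n + 2) (Equiv.swap 0 1)]
  congr 1
  funext i
  refine Fin.cases rfl (fun j => Fin.cases rfl (fun k => ?_) j) i
  have hk : k.succ.succ ≠ 1 := (Fin.succ_injective _).ne (Fin.succ_ne_zero k)
  rw [Function.comp_apply, Equiv.swap_apply_of_ne_of_ne (Fin.succ_ne_zero _) hk]
  rfl

section Measurability

variable [MeasurableSpace E]

theorem measurable_sub {n : ℕ} (I : Finset (Fin n)) :
    Measurable fun x : Fin n → E => sub x I :=
  measurable_pi_lambda _ fun _ => measurable_pi_apply _

theorem measurable_D {Φ : CF E} (hΦ : ∀ n, Measurable (Φ n)) (x : E) (n : ℕ) :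
    Measurable (D x Φ n) :=
  (hΦ (n + 1)).comp <| measurable_pi_lambda _ <|
    Fin.cases measurable_const fun i => measurable_pi_apply i

-- Every factor of a nonzero term of `Φ^{∗m}` has at least one argument, so on `n` points no factor
-- has more than `n + 1 - m` arguments.
theorem measurable_starPow {Φ : CF E} (hΦ0 : Φ 0 = 0) {m n : ℕ}
    (hΦ : ∀ k, k + m ≤ n + 1 → Measurable (Φ k)) : Measurable (starPow Φ m n) := by
  induction m generalizing n with
  | zero => exact measurable_const
  | succ m ih =>
    rw [starPow]
    unfold conv
    refine Finset.measurable_sum _ fun I _ => ?_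
    have hcard := card_add_card_compl_fin I
    by_cases hI : I.card = 0
    · simp only [apply_eq_zero_of_eq_zero hΦ0 hI, zero_mul, measurable_const]
    by_cases hIc : Iᶜ.card < m
    · simp only [starPow_apply_eq_zero_of_lt hΦ0 hIc, Pi.zero_apply, mul_zero, measurable_const]
    · exact ((hΦ _ (by omega)).comp (measurable_sub I)).mul
        ((ih fun k hk => hΦ k (by omega)).comp (measurable_sub Iᶜ))

theorem measurable_of_measurable_starExp {Φ : CF E} (hΦ0 : Φ 0 = 0)
    (hexp : ∀ n, Measurable (starExp Φ n)) (n : ℕ) : Measurable (Φ n) := by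
  induction n using Nat.strong_induction_on with
  | _ n ih =>
    obtain _ | n := n
    · rw [hΦ0]
      exact measurable_const
    have hpow (m : ℕ) : Measurable (starPow Φ (m + 2) (n + 1)) :=
      measurable_starPow hΦ0 fun k hk => ih k (by omega)
    rw [show Φ (n + 1) = _ from funext fun x => eq_sub_of_add_eq' (starExp_succ_apply Φ n x).symm]
    exact (hexp _).sub (Finset.measurable_sum _ fun m _ => (hpow m).const_mul _)

end Measurability

section GenSeries

variable [MeasurableSpace E]

theorem measurePreserving_sub_prod_sub_compl (μ : Measure E) [SigmaFinite μ] {n : ℕ}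
    (I : Finset (Fin n)) :
    MeasurePreserving (fun x : Fin n → E => (sub x I, sub x Iᶜ)) (Measure.pi fun _ => μ)
      ((Measure.pi fun _ => μ).prod (Measure.pi fun _ => μ)) :=
  (measurePreserving_sumPiEquivProdPi fun _ : Fin I.card ⊕ Fin Iᶜ.card => μ).comp <|
    measurePreserving_arrowCongr' (fun _ : Fin n => μ) (fun _ => μ)
      (finSumEquivOfFinset (s := I) rfl rfl).symm (MeasurableEquiv.refl E)
      fun _ => MeasurePreserving.id μ

/-- Integrability of every component of a configuration functional with respect to the product
measures `μⁿ`: the condition under which the coefficients of `genSeries` are not junk values. -/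
def IsIntegrable (μ : Measure E) (Φ : CF E) : Prop :=
  ∀ n, Integrable (Φ n) (Measure.pi fun _ => μ)

/-- The exponential generating series `∑ zⁿ/n! ∫ Φ^{(n)} dμⁿ` of a configuration functional,
as a formal power series; the activity `z` is part of the coefficients, so that the value of the
series is the sum of its coefficients. -/
noncomputable def genSeries (z : ℝ) (μ : Measure E) (Φ : CF E) : PowerSeries ℝ :=
  PowerSeries.mk fun n => z ^ n / n.factorial * ∫ x, Φ n x ∂(Measure.pi fun _ => μ)

variable {z : ℝ} {μ : Measure E} {Φ Ψ : CF E}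

theorem coeff_genSeries (n : ℕ) : PowerSeries.coeff n (genSeries z μ Φ) =
    z ^ n / n.factorial * ∫ x, Φ n x ∂(Measure.pi fun _ => μ) :=
  PowerSeries.coeff_mk _ _

theorem genSeries_smul (a : ℝ) : genSeries z μ (a • Φ) = a • genSeries z μ Φ := by
  ext n
  simp only [PowerSeries.coeff_smul, coeff_genSeries, Pi.smul_apply, smul_eq_mul,
    integral_const_mul]
  ring

theorem constantCoeff_genSeries_eq_zero (hΦ0 : Φ 0 = 0) :
    PowerSeries.constantCoeff (genSeries z μ Φ) = 0 := by
  simp [← PowerSeries.coeff_zero_eq_constantCoeff_apply, coeff_genSeries, hΦ0]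

theorem genSeries_unit : genSeries z μ (unit : CF E) = 1 := by
  ext n
  rw [coeff_genSeries, PowerSeries.coeff_one]
  obtain _ | n := n <;> simp [unit, Measure.real]

theorem isIntegrable_unit : IsIntegrable μ (unit : CF E)
  | 0 => by
    rw [Measure.pi_of_empty]
    exact integrable_const _
  | _ + 1 => integrable_zero _ _ _

variable [SigmaFinite μ]

theorem IsIntegrable.sub_mul_sub_compl (hΨ : IsIntegrable μ Ψ) (hΦ : IsIntegrable μ Φ) {n : ℕ}
    (I : Finset (Fin n)) :
    Integrable (fun x => Ψ I.card (sub x I) * Φ Iᶜ.card (sub x Iᶜ)) (Measure.pi fun _ => μ) :=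
  (measurePreserving_sub_prod_sub_compl μ I).integrable_comp_of_integrable
    ((hΨ I.card).mul_prod (hΦ Iᶜ.card))

theorem IsIntegrable.integral_sub_mul_sub_compl (hΨ : IsIntegrable μ Ψ) (hΦ : IsIntegrable μ Φ)
    {n : ℕ} (I : Finset (Fin n)) :
    ∫ x, Ψ I.card (sub x I) * Φ Iᶜ.card (sub x Iᶜ) ∂(Measure.pi fun _ => μ) =
      (∫ x, Ψ I.card x ∂(Measure.pi fun _ => μ)) *
        ∫ x, Φ Iᶜ.card x ∂(Measure.pi fun _ => μ) := by
  have hmp := measurePreserving_sub_prod_sub_compl μ I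
  have hmeas := ((hΨ I.card).mul_prod (hΦ Iᶜ.card)).aestronglyMeasurable
  rw [← hmp.map_eq] at hmeas
  rw [← integral_prod_mul, ← hmp.map_eq, integral_map hmp.measurable.aemeasurable hmeas]

theorem IsIntegrable.conv (hΨ : IsIntegrable μ Ψ) (hΦ : IsIntegrable μ Φ) :
    IsIntegrable μ (conv Ψ Φ) :=
  fun _ => integrable_finsetSum _ fun I _ => hΨ.sub_mul_sub_compl hΦ I

theorem IsIntegrable.starPow (hΦ : IsIntegrable μ Φ) : ∀ m, IsIntegrable μ (starPow Φ m)
  | 0 => isIntegrable_unit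
  | m + 1 => hΦ.conv (hΦ.starPow m)

theorem IsIntegrable.integral_conv (hΨ : IsIntegrable μ Ψ) (hΦ : IsIntegrable μ Φ) (n : ℕ) :
    ∫ x, CF.conv Ψ Φ n x ∂(Measure.pi fun _ => μ) =
      ∑ p ∈ antidiagonal n, n.choose p.1 *
        ((∫ x, Ψ p.1 x ∂(Measure.pi fun _ => μ)) * ∫ x, Φ p.2 x ∂(Measure.pi fun _ => μ)) := by
  set u : ℕ → ℝ := fun k => ∫ x, Ψ k x ∂(Measure.pi fun _ => μ)
  set v : ℕ → ℝ := fun k => ∫ x, Φ k x ∂(Measure.pi fun _ => μ)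
  have hcompl (I : Finset (Fin n)) : Iᶜ.card = n - I.card :=
    Nat.eq_sub_of_add_eq' (card_add_card_compl_fin I)
  calc ∫ x, CF.conv Ψ Φ n x ∂(Measure.pi fun _ => μ)
      = ∑ I : Finset (Fin n), u I.card * v Iᶜ.card := by
        unfold CF.conv
        rw [integral_finsetSum _ fun I _ => hΨ.sub_mul_sub_compl hΦ I]
        exact Finset.sum_congr rfl fun I _ => hΨ.integral_sub_mul_sub_compl hΦ I
    _ = ∑ I ∈ (univ : Finset (Fin n)).powerset, u I.card * v (n - I.card) := by
        simp only [hcompl, Finset.powerset_univ]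
    _ = ∑ k ∈ Finset.range (n + 1), n.choose k * (u k * v (n - k)) := by
        rw [Finset.sum_powerset_apply_card fun k => u k * v (n - k)]
        simp only [Finset.card_fin, nsmul_eq_mul]
    _ = ∑ p ∈ antidiagonal n, n.choose p.1 * (u p.1 * v p.2) :=
        (Finset.Nat.sum_antidiagonal_eq_sum_range_succ
          (fun k l => (n.choose k : ℝ) * (u k * v l)) n).symm

theorem IsIntegrable.genSeries_conv (hΨ : IsIntegrable μ Ψ) (hΦ : IsIntegrable μ Φ) :
    genSeries z μ (CF.conv Ψ Φ) = genSeries z μ Ψ * genSeries z μ Φ := by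
  ext n
  rw [PowerSeries.coeff_mul, coeff_genSeries, hΨ.integral_conv hΦ, Finset.mul_sum]
  refine Finset.sum_congr rfl fun p hp => ?_
  obtain rfl := mem_antidiagonal.1 hp
  rw [coeff_genSeries, coeff_genSeries, Nat.cast_add_choose, pow_add]
  have := Nat.factorial_ne_zero (p.1 + p.2)
  field_simp

theorem IsIntegrable.genSeries_starPow (hΦ : IsIntegrable μ Φ) (m : ℕ) :
    genSeries z μ (CF.starPow Φ m) = genSeries z μ Φ ^ m := by
  induction m with
  | zero => rw [CF.starPow, genSeries_unit, pow_zero]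
  | succ m ih => rw [CF.starPow, hΦ.genSeries_conv (hΦ.starPow m), ih, pow_succ']

theorem IsIntegrable.genSeries_starExp (hΦ : IsIntegrable μ Φ) (hΦ0 : Φ 0 = 0) :
    genSeries z μ (starExp Φ) = (PowerSeries.exp ℝ).subst (genSeries z μ Φ) := by
  ext n
  have hint (m : ℕ) := (hΦ.starPow m n).const_mul ((m.factorial : ℝ)⁻¹)
  rw [coeff_subst_eq_sum_range (constantCoeff_genSeries_eq_zero hΦ0), coeff_genSeries]
  unfold starExp
  rw [integral_finsetSum _ fun m _ => hint m, Finset.mul_sum]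
  refine Finset.sum_congr rfl fun m _ => ?_
  rw [← hΦ.genSeries_starPow, coeff_exp_real, coeff_genSeries, integral_const_mul]
  ring

end GenSeries

section MomentBound

variable [MeasurableSpace E] {μ : Measure E} {Φ : CF E}

theorem lintegral_enorm_succ_le [SigmaFinite μ] {k : ℕ} (hΦ : Measurable (Φ (k + 1))) {B : ENNReal}
    (hB : ∀ y, ∫⁻ w, ‖Φ (k + 1) (Fin.cons y w)‖ₑ ∂(Measure.pi fun _ => μ) ≤ B) :
    ∫⁻ x, ‖Φ (k + 1) x‖ₑ ∂(Measure.pi fun _ => μ) ≤ B * μ Set.univ := by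
  rw [lintegral_pi_fin_succ μ hΦ.enorm, ← lintegral_const]
  exact lintegral_mono hB

variable [IsFiniteMeasure μ]

theorem isIntegrable_of_lintegral_enorm_cons_le (hΦ0 : Φ 0 = 0) (hΦ : ∀ n, Measurable (Φ n))
    {b : ℕ → ℝ}
    (hb : ∀ k y, ∫⁻ w, ‖Φ (k + 1) (Fin.cons y w)‖ₑ ∂(Measure.pi fun _ => μ) ≤
      ENNReal.ofReal (b k)) : IsIntegrable μ Φ
  | 0 => by
    rw [hΦ0]
    exact integrable_zero _ _ _
  | k + 1 => ⟨(hΦ _).aestronglyMeasurable, (lintegral_enorm_succ_le (hΦ _) (hb k)).trans_lt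
      (ENNReal.mul_lt_top ENNReal.ofReal_lt_top (measure_lt_top _ _))⟩

theorem norm_integral_succ_le {k : ℕ} (hΦ : Measurable (Φ (k + 1))) {b : ℝ} (hb0 : 0 ≤ b)
    (hb : ∀ y, ∫⁻ w, ‖Φ (k + 1) (Fin.cons y w)‖ₑ ∂(Measure.pi fun _ => μ) ≤
      ENNReal.ofReal b) :
    ‖∫ x, Φ (k + 1) x ∂(Measure.pi fun _ => μ)‖ ≤ b * μ.real Set.univ := by
  have henorm := (enorm_integral_le_lintegral_enorm _).trans (lintegral_enorm_succ_le hΦ hb)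
  rw [← ofReal_measureReal, ← ENNReal.ofReal_mul hb0, ← ofReal_norm] at henorm
  exact (ENNReal.ofReal_le_ofReal_iff (by positivity)).1 henorm

theorem summable_norm_coeff_genSeries (hΦ : ∀ n, Measurable (Φ n)) {z C c : ℝ} (hC : 0 ≤ C)
    (hc : 0 ≤ c) (hzc : |z| * c < 1)
    (hbound : ∀ k y, ∫⁻ w, ‖Φ (k + 1) (Fin.cons y w)‖ₑ ∂(Measure.pi fun _ => μ) ≤
      ENNReal.ofReal (k.factorial * C * c ^ k)) :
    Summable fun n => ‖PowerSeries.coeff n (genSeries z μ Φ)‖ := by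
  rw [← summable_nat_add_iff 1]
  have hgeom := summable_geometric_of_lt_one (by positivity) hzc
  refine (hgeom.mul_left (|z| * C * μ.real Set.univ)).of_nonneg_of_le
    (fun _ => norm_nonneg _) fun k => ?_
  have hfact : (k.factorial : ℝ) / (k + 1).factorial ≤ 1 :=
    div_le_one_of_le₀ (by exact_mod_cast Nat.factorial_le k.le_succ) (by positivity)
  calc ‖PowerSeries.coeff (k + 1) (genSeries z μ Φ)‖
      = |z| ^ (k + 1) / (k + 1).factorial * ‖∫ x, Φ (k + 1) x ∂(Measure.pi fun _ => μ)‖ := by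
        rw [coeff_genSeries, norm_mul, norm_div, norm_pow, Real.norm_natCast, Real.norm_eq_abs z]
    _ ≤ |z| ^ (k + 1) / (k + 1).factorial * (k.factorial * C * c ^ k * μ.real Set.univ) := by
        gcongr
        exact norm_integral_succ_le (hΦ _) (by positivity) (hbound k)
    _ = k.factorial / (k + 1).factorial * (|z| * C * μ.real Set.univ * (|z| * c) ^ k) := by
        ring
    _ ≤ |z| * C * μ.real Set.univ * (|z| * c) ^ k :=
        mul_le_of_le_one_left (by positivity) hfact

end MomentBound

end CF

open CF in
theorem twoPoint_janossy_expansion_general {E : Type} [MeasurableSpace E] (μ : Measure E)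
    [IsFiniteMeasure μ] {ρ : CF E} (hρsymm : IsSymm ρ) (hρmeas : ∀ n, Measurable (ρ n))
    {x₁ x₂ : E} (h12 : ρ 2 ![x₁, x₂] ≠ 0) {F : CF E} (hF0 : F 0 = 0)
    (hF : D2 x₁ x₂ ρ = ρ 2 ![x₁, x₂] • starExp F) {z C c : ℝ} (hC : 0 ≤ C) (hc : 0 ≤ c)
    (hzc : |z| * c < 1)
    (hbound : ∀ (k : ℕ) (y : E),
      ∫⁻ w, ENNReal.ofReal |F (k + 1) (Fin.cons y w)| ∂(Measure.pi fun _ => μ) ≤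
        ENNReal.ofReal (k.factorial * C * c ^ k)) :
    Summable (fun k : ℕ => |z ^ k / k.factorial * ∫ y, F k y ∂(Measure.pi fun _ => μ)|) ∧
    Summable (fun k : ℕ => |z ^ k / k.factorial *
      ∫ y, ρ (k + 2) (Fin.cons x₁ (Fin.cons x₂ y)) ∂(Measure.pi fun _ => μ)|) ∧
    ∑' k : ℕ, z ^ k / k.factorial *
        ∫ y, ρ (k + 2) (Fin.cons x₁ (Fin.cons x₂ y)) ∂(Measure.pi fun _ => μ) =
      ρ 2 ![x₁, x₂] * Real.exp
        (∑' k : ℕ, z ^ k / k.factorial * ∫ y, F k y ∂(Measure.pi fun _ => μ)) := by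
  have hexp : starExp F = (ρ 2 ![x₁, x₂])⁻¹ • D2 x₁ x₂ ρ := by rw [hF, inv_smul_smul₀ h12]
  have hFmeas : ∀ n, Measurable (F n) := measurable_of_measurable_starExp hF0 fun n => by
    rw [hexp, Pi.smul_apply]
    exact (measurable_D (measurable_D hρmeas x₂) x₁ n).const_smul _
  simp only [← Real.enorm_eq_ofReal_abs] at hbound
  have hFint : IsIntegrable μ F := isIntegrable_of_lintegral_enorm_cons_le hF0 hFmeas hbound
  have hF0' := constantCoeff_genSeries_eq_zero (z := z) (μ := μ) hF0
  have hFsum : Summable fun k => ‖PowerSeries.coeff k (genSeries z μ F)‖ :=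
    summable_norm_coeff_genSeries hFmeas hC hc hzc hbound
  have hρcoeff (k : ℕ) : z ^ k / k.factorial *
        ∫ y, ρ (k + 2) (Fin.cons x₁ (Fin.cons x₂ y)) ∂(Measure.pi fun _ => μ) =
      ρ 2 ![x₁, x₂] * PowerSeries.coeff k ((PowerSeries.exp ℝ).subst (genSeries z μ F)) := by
    rw [← hFint.genSeries_starExp hF0, ← smul_eq_mul (ρ 2 ![x₁, x₂]), ← PowerSeries.coeff_smul,
      ← genSeries_smul, ← hF, hρsymm.D2_comm, coeff_genSeries]
    rfl
  simp only [hρcoeff, ← coeff_genSeries]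
  refine ⟨hFsum, ?_, ?_⟩
  · exact ((summable_norm_coeff_exp_subst hF0' hFsum).of_norm.mul_left _).abs
  · rw [tsum_mul_left, tsum_coeff_exp_subst hF0' hFsum]

open CF MeasureTheory in
/-- eq. (2.15): finite-volume expansion of the two-point Janossy
density. -/
theorem twoPoint_janossy_expansion (d : ℕ) (hd : 1 ≤ d)
    (Λ : Set (Euc d)) (hΛbdd : Bornology.IsBounded Λ) (hΛmeas : MeasurableSet Λ)
    (ρ : CF (Euc d)) (hρ0 : ρ 0 = 1) (hρsymm : IsSymm ρ)
    (hρmeas : ∀ n, Measurable (ρ n))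
    (x₁ x₂ : Euc d) (h12 : ρ 2 ![x₁, x₂] ≠ 0)
    (F : CF (Euc d)) (hF0 : F 0 = 0) (hFsymm : IsSymm F)
    (hF : D2 x₁ x₂ ρ = ρ 2 ![x₁, x₂] • starExp F)
    (C c : ℝ) (hC : 0 < C) (hc0 : 0 < c) (hc : c < 1 / 2)
    (hbound : ∀ (k : ℕ) (y : Euc d),
      ∫⁻ z, ENNReal.ofReal |F (k + 1) (Fin.cons y z)| ∂(piRestrict d Λ k) ≤
        ENNReal.ofReal (k.factorial * C * c ^ k)) :
    Summable (fun k : ℕ =>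
      |(-1 : ℝ) ^ k / k.factorial * ∫ y, F k y ∂(piRestrict d Λ k)|) ∧
    Summable (fun k : ℕ =>
      |(-1 : ℝ) ^ k / k.factorial *
        ∫ y, ρ (k + 2) (Fin.cons x₁ (Fin.cons x₂ y)) ∂(piRestrict d Λ k)|) ∧
    ∑' k : ℕ, (-1 : ℝ) ^ k / k.factorial *
        ∫ y, ρ (k + 2) (Fin.cons x₁ (Fin.cons x₂ y)) ∂(piRestrict d Λ k) =
      ρ 2 ![x₁, x₂] *
        Real.exp
          (∑' k : ℕ, (-1 : ℝ) ^ k / k.factorial *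
            ∫ y, F k y ∂(piRestrict d Λ k)) := by
  have : IsFiniteMeasure (volume.restrict Λ) := isFiniteMeasure_restrict.2 hΛbdd.measure_lt_top.ne
  exact twoPoint_janossy_expansion_general _ hρsymm hρmeas h12 hF0 hF hC.le hc0.le
    (by rw [abs_neg, abs_one]; linarith) hbound
end

section
/- (Lemma 3.3, splitting of the two-point expansion kernels.) Let ρ = (ρ^{(n)})_{n≥0} be a configuration functional over a type E with ρ^{(0)} = 1, and let ρ_T ∈ A₀ be the unique functional with ρ = exp∗ ρ_T. Let x₁, x₂ ∈ E and suppose ρ^{(1)}(x₁) ≠ 0, ρ^{(1)}(x₂) ≠ 0 and ρ^{(2)}(x₁,x₂) ≠ 0. Define: F ∈ A₀ by D_{x₁,x₂} ρ = ρ^{(2)}(x₁,x₂) · exp∗ F; for i = 1,2, ω_{x_i} ∈ A₀ by D_{x_i} ρ_T = ρ^{(1)}(x_i) · exp∗ ω_{x_i}; and ω_{(x₁,x₂)} ∈ A₀ as the unique functional satisfying D_{x₁,x₂} ρ_T / ρ^{(2)}(x₁,x₂) = ( exp∗ ω_{(x₁,x₂)} − (ρ^{(1)}(x₁)ρ^{(1)}(x₂)/ρ^{(2)}(x₁,x₂))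 · 𝟙 ) ∗ ( D_{x₁} ρ_T / ρ^{(1)}(x₁) ) ∗ ( D_{x₂} ρ_T / ρ^{(1)}(x₂) ). Then F = ρ_T + ω_{x₁} + ω_{x₂} + ω_{(x₁,x₂)}, i.e. for every k ≥ 1 and all y₁,…,y_k ∈ E: F^{(k)}(y₁,…,y_k) = ρ_T^{(k)}(y₁,…,y_k) + ω_{x₁}^{(k)}(y₁,…,y_k) + ω_{x₂}^{(k)}(y₁,…,y_k) + ω_{(x₁,x₂)}^{(k)}(y₁,…,y_k). -/
open MeasureTheory Finset

/-!
Convolution makes the configuration functionals a commutative algebra, and `D x` is a derivation of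
it which lowers the degree by one. Algebraic identities between convolutions can therefore be proved
by induction on the degree, from the product rule alone. On `A₀` the exponential solves
`D x (exp∗ Φ) = D x Φ ∗ exp∗ Φ`; a linear equation of this kind has only one solution with a given
`0`-component, so `exp∗` turns sums into convolutions and is injective. Differentiating twice,
`D_{x₁,x₂} ρ = (D_{x₁,x₂} ρ_T + D_{x₁} ρ_T ∗ D_{x₂} ρ_T) ∗ ρ`. The multiple of `𝟙` subtracted in the
definition of `ω_{(x₁,x₂)}` cancels the product of first derivatives exactly, which leaves
`exp∗ F = exp∗ ρ_T ∗ exp∗ ω_{x₁} ∗ exp∗ ω_{x₂} ∗ exp∗ ω_{(x₁,x₂)}`.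
-/

namespace CF

variable {E : Type} {n k : ℕ}

theorem apply_sub (A : CF E) (x : Fin n → E) {I : Finset (Fin n)} {f : Fin k → Fin n}
    (hcard : I.card = k) (hmem : ∀ i, f i ∈ I) (hmono : StrictMono f) :
    A I.card (sub x I) = A k (x ∘ f) := by
  subst hcard
  rw [orderEmbOfFin_unique rfl hmem hmono]
  rfl

theorem apply_sub_cons_map_succ (A : CF E) (x : E) (y : Fin n → E) (J : Finset (Fin n)) :
    A (J.map (Fin.succEmb n)).card (sub (Fin.cons x y : Fin (n + 1) → E) (J.map (Fin.succEmb n))) =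
      A J.card (sub y J) :=
  apply_sub A _ (f := Fin.succ ∘ J.orderEmbOfFin rfl) (card_map _) (by simp)
    (Fin.strictMono_succ.comp (J.orderEmbOfFin rfl).strictMono)

theorem apply_sub_cons_insert_zero (A : CF E) (x : E) (y : Fin n → E) (J : Finset (Fin n)) :
    A (insert 0 (J.map (Fin.succEmb n))).card
        (sub (Fin.cons x y : Fin (n + 1) → E) (insert 0 (J.map (Fin.succEmb n)))) =
      D x A J.card (sub y J) := by
  have hmono : StrictMono (Fin.succ ∘ J.orderEmbOfFin rfl) :=
    Fin.strictMono_succ.comp (J.orderEmbOfFin rfl).strictMono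
  rw [apply_sub A _ (f := Fin.cons 0 (Fin.succ ∘ J.orderEmbOfFin rfl)) (by simp)
    (Fin.cases (by simp) (by simp)) (Fin.strictMono_cons.2 ⟨by simp, hmono⟩), D]
  congr 1
  funext i
  cases i using Fin.cases <;> rfl

theorem compl_map_succ (J : Finset (Fin n)) :
    (J.map (Fin.succEmb n))ᶜ = insert 0 (Jᶜ.map (Fin.succEmb n)) := by
  ext i
  cases i using Fin.cases <;> simp

theorem compl_insert_zero_map_succ (J : Finset (Fin n)) :
    (insert 0 (J.map (Fin.succEmb n)))ᶜ = Jᶜ.map (Fin.succEmb n) := by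
  rw [compl_eq_comm, compl_map_succ, compl_compl]

theorem sum_finset_fin_succ {M : Type*} [AddCommMonoid M] (f : Finset (Fin (n + 1)) → M) :
    ∑ I, f I = ∑ J : Finset (Fin n), f (J.map (Fin.succEmb n)) +
      ∑ J : Finset (Fin n), f (insert 0 (J.map (Fin.succEmb n))) := by
  have hpowerset : (univ.map (Fin.succEmb n)).powerset =
      univ.map (mapEmbedding (Fin.succEmb n)).toEmbedding := by
    ext I
    simp [subset_map_iff, eq_comm]
  have huniv : (univ : Finset (Fin (n + 1))) = insert 0 (univ.map (Fin.succEmb n)) := by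
    ext i
    cases i using Fin.cases <;> simp
  rw [← powerset_univ, huniv, sum_powerset_insert (by simp), hpowerset, sum_map, sum_map]
  rfl

theorem D_conv (x : E) (A B : CF E) : D x (conv A B) = conv (D x A) B + conv A (D x B) := by
  funext n y
  rw [D, conv, sum_finset_fin_succ, add_comm]
  congr 1 <;> refine sum_congr rfl fun J _ ↦ ?_
  · rw [compl_insert_zero_map_succ, apply_sub_cons_insert_zero A, apply_sub_cons_map_succ B]
  · rw [compl_map_succ, apply_sub_cons_map_succ A, apply_sub_cons_insert_zero B]

theorem apply_succ (A : CF E) (x : Fin (n + 1) → E) : A (n + 1) x = D (x 0) A n (Fin.tail x) := by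
  rw [D, Fin.cons_self_tail]

theorem ext_of_D {A B : CF E} (h0 : A 0 = B 0) (hD : ∀ x, D x A = D x B) : A = B := by
  funext n x
  cases n with
  | zero => rw [h0]
  | succ n => rw [apply_succ A, apply_succ B, hD]

theorem conv_apply_zero (A B : CF E) : conv A B 0 = A 0 * B 0 := by
  funext x
  rw [conv, Fintype.sum_unique, Pi.mul_apply]
  congr!

theorem conv_apply_congr_right (A : CF E) {B C : CF E} (h : ∀ k ≤ n, B k = C k) :
    conv A B n = conv A C n := by
  funext x
  refine Fintype.sum_congr _ _ fun I ↦ ?_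
  rw [h _ (card_le_univ _ |>.trans_eq (Fintype.card_fin n))]

theorem conv_apply_eq_zero {A B : CF E} {a b : ℕ} (hA : ∀ i < a, A i = 0) (hB : ∀ j < b, B j = 0)
    (hn : n < a + b) : conv A B n = 0 := by
  funext x
  refine sum_eq_zero fun I _ ↦ ?_
  have hcard : I.card + Iᶜ.card = n := by rw [card_add_card_compl, Fintype.card_fin]
  obtain hI | hI : I.card < a ∨ Iᶜ.card < b := by omega
  · simp [hA _ hI]
  · simp [hB _ hI]

theorem add_conv (A B C : CF E) : conv (A + B) C = conv A C + conv B C := by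
  funext n x
  simp [conv, add_mul, sum_add_distrib]

theorem smul_conv (c : ℝ) (A B : CF E) : conv (c • A) B = c • conv A B := by
  funext n x
  simp [conv, mul_sum, mul_assoc]

theorem conv_comm (A B : CF E) : conv A B = conv B A := by
  funext n
  induction n generalizing A B with
  | zero => rw [conv_apply_zero, conv_apply_zero, mul_comm]
  | succ n ih =>
    funext x
    simp only [apply_succ (conv _ _), D_conv, Pi.add_apply]
    rw [ih, ih A, add_comm]

theorem conv_add (A B C : CF E) : conv A (B + C) = conv A B + conv A C := by
  simp only [conv_comm A, add_conv]

theorem conv_assoc (A B C : CF E) : conv (conv A B) C = conv A (conv B C) := by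
  funext n
  induction n generalizing A B C with
  | zero => simp only [conv_apply_zero, mul_assoc]
  | succ n ih =>
    funext x
    simp only [apply_succ (conv _ _), D_conv, add_conv, conv_add, Pi.add_apply, ih, add_assoc]

theorem D_unit (x : E) : D x unit = 0 := by
  funext n y
  simp [D, unit]

theorem zero_conv (A : CF E) : conv 0 A = 0 := by
  funext n x
  simp [conv]

theorem unit_apply_zero : (unit : CF E) 0 = 1 := by
  funext x
  simp [unit]

theorem unit_conv (A : CF E) : conv unit A = A := by
  funext n
  induction n generalizing A with
  | zero => rw [conv_apply_zero, unit_apply_zero, one_mul]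
  | succ n ih =>
    funext x
    rw [apply_succ (conv unit A), D_conv, D_unit, zero_conv, zero_add, ih, ← apply_succ A]

/-- The real vector space of configuration functionals with convolution as multiplication. It is a
type synonym because `CF E`, as a Pi type, already carries the pointwise product. -/
def ConvAlg (E : Type) : Type := CF E

namespace ConvAlg

noncomputable instance : AddCommGroup (ConvAlg E) := inferInstanceAs (AddCommGroup (CF E))

noncomputable instance : Module ℝ (ConvAlg E) := inferInstanceAs (Module ℝ (CF E))

noncomputable instance : CommRing (ConvAlg E) where
  __ := (inferInstance : AddCommGroup (ConvAlg E))
  mul := conv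
  one := unit
  mul_assoc := conv_assoc
  mul_comm := conv_comm
  one_mul := unit_conv
  mul_one A := (conv_comm A unit).trans (unit_conv A)
  left_distrib := conv_add
  right_distrib := add_conv
  zero_mul := zero_conv
  mul_zero A := (conv_comm A 0).trans (zero_conv A)

noncomputable instance : Algebra ℝ (ConvAlg E) :=
  Algebra.ofModule smul_conv fun c A B ↦ by
    rw [mul_comm, mul_comm A]
    exact smul_conv c B A

/-- The identity map from configuration functionals to the convolution algebra. -/
noncomputable def of : CF E ≃ₗ[ℝ] ConvAlg E := LinearEquiv.refl ℝ (CF E)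

theorem of_conv (A B : CF E) : of (conv A B) = of A * of B := rfl

theorem of_unit : of (unit : CF E) = 1 := rfl

theorem of_starPow (A : CF E) (m : ℕ) : of (starPow A m) = of A ^ m := by
  induction m with
  | zero => rw [starPow, of_unit, pow_zero]
  | succ m ih => rw [starPow, of_conv, ih, pow_succ']

/-- `D x` as a derivation of the convolution algebra. -/
noncomputable def derivation (x : E) : Derivation ℝ (ConvAlg E) (ConvAlg E) :=
  Derivation.mk'
    { toFun := fun A ↦ of (D x (of.symm A))
      map_add' := fun _ _ ↦ rfl
      map_smul' := fun _ _ ↦ rfl }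
    fun A B ↦ by
      change of (D x (conv (of.symm A) (of.symm B))) = _
      rw [D_conv, map_add, of_conv, of_conv, add_comm, mul_comm (of (D x _))]
      rfl

theorem of_D (x : E) (A : CF E) : of (D x A) = derivation x (of A) := rfl

end ConvAlg

open ConvAlg

theorem starPow_apply_eq_zero {A : CF E} (h0 : A 0 = 0) {m : ℕ} (hnm : n < m) :
    starPow A m n = 0 := by
  induction m generalizing n with
  | zero => omega
  | succ m ih =>
    exact conv_apply_eq_zero (a := 1) (fun i hi ↦ by rwa [Nat.lt_one_iff.1 hi])
      (fun j hj ↦ ih hj) (by omega)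

theorem D_starPow_succ (x : E) (A : CF E) (m : ℕ) :
    D x (starPow A (m + 1)) = (m + 1 : ℝ) • conv (D x A) (starPow A m) := by
  apply of.injective
  rw [of_D, of_starPow, Derivation.leibniz_pow, map_smul, of_conv, of_D, of_starPow,
    add_tsub_cancel_right, smul_eq_mul, mul_comm, ← Nat.cast_smul_eq_nsmul ℝ, Nat.cast_succ]

/-- The partial sum of degree `N` of the series of `exp∗ A`. -/
noncomputable def starExpPartial (N : ℕ) (A : CF E) : CF E :=
  ∑ m ∈ range (N + 1), (m.factorial : ℝ)⁻¹ • starPow A m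

theorem starExpPartial_apply_of_le {A : CF E} (h0 : A 0 = 0) {N : ℕ} (hn : n ≤ N) :
    starExpPartial N A n = starExp A n := by
  funext x
  simp only [starExpPartial, starExp, Finset.sum_apply, Pi.smul_apply, smul_eq_mul]
  symm
  refine sum_subset (range_mono (by omega)) fun m _ hm ↦ ?_
  rw [starPow_apply_eq_zero h0 (by simpa using hm), Pi.zero_apply, mul_zero]

theorem D_starExpPartial_succ (x : E) (A : CF E) (N : ℕ) :
    D x (starExpPartial (N + 1) A) = conv (D x A) (starExpPartial N A) := by
  have hzero : derivation x (of ((Nat.factorial 0 : ℝ)⁻¹ • starPow A 0)) = 0 := by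
    simp [of_starPow]
  have hsucc (m : ℕ) : derivation x (of (((m + 1).factorial : ℝ)⁻¹ • starPow A (m + 1))) =
      of (D x A) * of ((m.factorial : ℝ)⁻¹ • starPow A m) := by
    have hcoeff : ((m + 1).factorial : ℝ)⁻¹ * (m + 1) = (m.factorial : ℝ)⁻¹ := by
      rw [Nat.factorial_succ]
      push_cast
      field_simp
    rw [map_smul, Derivation.map_smul, ← of_D, D_starPow_succ, map_smul, smul_smul, hcoeff, of_conv,
      map_smul, mul_smul_comm]
  apply of.injective
  rw [of_D, of_conv, starExpPartial, starExpPartial, map_sum, map_sum, map_sum, sum_range_succ',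
    hzero, add_zero, mul_sum]
  exact sum_congr rfl fun m _ ↦ hsucc m

theorem D_starExp (x : E) {A : CF E} (h0 : A 0 = 0) :
    D x (starExp A) = conv (D x A) (starExp A) := by
  funext n
  calc D x (starExp A) n = D x (starExpPartial (n + 1) A) n := by
        funext y
        rw [D, D, starExpPartial_apply_of_le h0 le_rfl]
    _ = conv (D x A) (starExpPartial n A) n := by rw [D_starExpPartial_succ]
    _ = conv (D x A) (starExp A) n :=
        conv_apply_congr_right _ fun _ hk ↦ starExpPartial_apply_of_le h0 hk

theorem eq_of_D_eq_conv {A B : CF E} (K : E → CF E) (h0 : A 0 = B 0)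
    (hA : ∀ x, D x A = conv (K x) A) (hB : ∀ x, D x B = conv (K x) B) : A = B := by
  funext n
  induction n using Nat.strong_induction_on with
  | _ n ih =>
    cases n with
    | zero => exact h0
    | succ n =>
      funext x
      rw [apply_succ A, apply_succ B, hA, hB,
        conv_apply_congr_right _ fun k hk ↦ ih k (Nat.lt_succ_of_le hk)]

theorem starExp_apply_zero (A : CF E) : starExp A 0 = 1 := by
  funext x
  simp [starExp, starPow, unit]

theorem of_starExp_add {A B : CF E} (hA : A 0 = 0) (hB : B 0 = 0) :
    of (starExp (A + B)) = of (starExp A) * of (starExp B) := by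
  rw [← of_conv]
  congr 1
  refine eq_of_D_eq_conv (fun x ↦ D x (A + B)) ?_ (fun x ↦ ?_) fun x ↦ ?_
  · simp only [conv_apply_zero, starExp_apply_zero, mul_one]
  · exact D_starExp x (by simp [hA, hB])
  · apply of.injective
    rw [D_conv, D_starExp x hA, D_starExp x hB]
    simp only [map_add, of_conv, of_D]
    ring

theorem starExp_zero : starExp (0 : CF E) = unit := by
  refine ext_of_D ?_ fun x ↦ ?_
  · rw [starExp_apply_zero, unit_apply_zero]
  · rw [D_starExp x rfl, D_unit]
    exact zero_conv _

theorem isUnit_of_starExp {A : CF E} (hA : A 0 = 0) : IsUnit (of (starExp A)) := by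
  refine IsUnit.of_mul_eq_one (of (starExp (-A))) ?_
  rw [← of_starExp_add hA (by simp [hA]), add_neg_cancel, starExp_zero, of_unit]

theorem starExp_injOn : Set.InjOn (starExp (E := E)) {A | A 0 = 0} := by
  intro A hA B hB h
  refine ext_of_D (hA.trans hB.symm) fun x ↦ of.injective ?_
  apply (isUnit_of_starExp hA).mul_right_cancel
  rw [← of_conv, ← D_starExp x hA, h, D_starExp x hB, of_conv]

theorem of_D2_starExp (x₁ x₂ : E) {A : CF E} (h0 : A 0 = 0) :
    of (D2 x₁ x₂ (starExp A)) =
      (of (D2 x₁ x₂ A) + of (D x₁ A) * of (D x₂ A)) * of (starExp A) := by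
  rw [D2, D2, D_starExp x₂ h0, D_conv, D_starExp x₁ h0]
  simp only [map_add, of_conv]
  ring

end CF

open CF ConvAlg in
theorem twoPoint_kernel_splitting_general {E : Type} {ρ ρT F ω₁ ω₂ ω₁₂ : CF E} {x₁ x₂ : E}
    (hρT0 : ρT 0 = 0) (hρTexp : starExp ρT = ρ)
    (h1 : ρ 1 ![x₁] ≠ 0) (h2 : ρ 1 ![x₂] ≠ 0) (h12 : ρ 2 ![x₁, x₂] ≠ 0)
    (hF0 : F 0 = 0) (hF : D2 x₁ x₂ ρ = ρ 2 ![x₁, x₂] • starExp F)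
    (hω₁0 : ω₁ 0 = 0) (hω₁ : D x₁ ρT = ρ 1 ![x₁] • starExp ω₁)
    (hω₂0 : ω₂ 0 = 0) (hω₂ : D x₂ ρT = ρ 1 ![x₂] • starExp ω₂)
    (hω₁₂0 : ω₁₂ 0 = 0)
    (hω₁₂ : (ρ 2 ![x₁, x₂])⁻¹ • D2 x₁ x₂ ρT =
      conv (conv (starExp ω₁₂ - ((ρ 1 ![x₁] * ρ 1 ![x₂]) / ρ 2 ![x₁, x₂]) • unit)
          ((ρ 1 ![x₁])⁻¹ • D x₁ ρT))
        ((ρ 1 ![x₂])⁻¹ • D x₂ ρT)) :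
    F = ρT + ω₁ + ω₂ + ω₁₂ := by
  subst hρTexp
  set r₁ := starExp ρT 1 ![x₁]
  set r₂ := starExp ρT 1 ![x₂]
  set r₁₂ := starExp ρT 2 ![x₁, x₂]
  rw [hω₁, hω₂, inv_smul_smul₀ h1, inv_smul_smul₀ h2, inv_smul_eq_iff₀ h12] at hω₁₂
  have hD2ρT : of (D2 x₁ x₂ ρT) = (r₁₂ • of (starExp ω₁₂) - (r₁ * r₂) • 1) *
      of (starExp ω₁) * of (starExp ω₂) := by
    rw [hω₁₂, map_smul, of_conv, of_conv, map_sub, map_smul, of_unit, ← smul_mul_assoc,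
      ← smul_mul_assoc, smul_sub, smul_smul, mul_div_cancel₀ _ h12]
  have hD2ρ : r₁₂ • of (starExp F) = r₁₂ • (of (starExp ρT) * of (starExp ω₁) *
      of (starExp ω₂) * of (starExp ω₁₂)) := by
    rw [← map_smul, ← hF, of_D2_starExp x₁ x₂ hρT0, hD2ρT, hω₁, hω₂, map_smul, map_smul]
    algebra
  have hsum : (ρT + ω₁ + ω₂ + ω₁₂) 0 = 0 := by simp [hρT0, hω₁0, hω₂0, hω₁₂0]
  refine starExp_injOn hF0 hsum (of.injective ?_)
  rw [smul_right_injective _ h12 hD2ρ, of_starExp_add _ hω₁₂0, of_starExp_add _ hω₂0,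
    of_starExp_add hρT0 hω₁0] <;> simp [hρT0, hω₁0, hω₂0]

open CF in
/-- Lemma 3.3: splitting of the two-point expansion kernels,
`F = ρ_T + ω_{x₁} + ω_{x₂} + ω_{(x₁,x₂)}`. -/
theorem twoPoint_kernel_splitting (E : Type) (ρ ρT F ω₁ ω₂ ω₁₂ : CF E) (x₁ x₂ : E)
    (hρ0 : ρ 0 = 1) (hρsymm : IsSymm ρ)
    (hρT0 : ρT 0 = 0) (hρTsymm : IsSymm ρT) (hρTexp : starExp ρT = ρ)
    (h1 : ρ 1 ![x₁] ≠ 0) (h2 : ρ 1 ![x₂] ≠ 0) (h12 : ρ 2 ![x₁, x₂] ≠ 0)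
    (hF0 : F 0 = 0) (hFsymm : IsSymm F)
    (hF : D2 x₁ x₂ ρ = ρ 2 ![x₁, x₂] • starExp F)
    (hω₁0 : ω₁ 0 = 0) (hω₁symm : IsSymm ω₁)
    (hω₁ : D x₁ ρT = ρ 1 ![x₁] • starExp ω₁)
    (hω₂0 : ω₂ 0 = 0) (hω₂symm : IsSymm ω₂)
    (hω₂ : D x₂ ρT = ρ 1 ![x₂] • starExp ω₂)
    (hω₁₂0 : ω₁₂ 0 = 0) (hω₁₂symm : IsSymm ω₁₂)
    (hω₁₂ : (ρ 2 ![x₁, x₂])⁻¹ • D2 x₁ x₂ ρT =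
      conv (conv (starExp ω₁₂ - ((ρ 1 ![x₁] * ρ 1 ![x₂]) / ρ 2 ![x₁, x₂]) • unit)
          ((ρ 1 ![x₁])⁻¹ • D x₁ ρT))
        ((ρ 1 ![x₂])⁻¹ • D x₂ ρT)) :
    F = ρT + ω₁ + ω₂ + ω₁₂ := by
  exact twoPoint_kernel_splitting_general hρT0 hρTexp h1 h2 h12 hF0 hF hω₁0 hω₁ hω₂0 hω₂ hω₁₂0 hω₁₂
end
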